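/- Let k ≥ 1 and let a : ℝᵏ → ℝᵏ be the diagonal linear map a(x)ᵢ = αᵢ·xᵢ, where each αᵢ ≥ α for some constant α > 1. Let m : ℝᵏ → ℝᵏ be an orthogonal linear map commuting with a. Let Λ ⊆ ℝᵏ be a set such that (m∘a)⁻¹(y) ∈ Λ whenever y ∈ Λ. Let q₀, q₁, …, q_w : ℝᵏ → ℝ be continuous functions and 0 < β₀ < βᵢ (for every 1 ≤ i ≤ w) be real numbers such that qᵢ(a(x)) = βᵢ·qᵢ(x) for all x ∈ ℝᵏ and all 0 ≤ i ≤ w. Suppose there are constants C ≥ 0, ε > 0 and s > 0 with β₀ < α^s, such that |q₀(x) + q₁(x) + ⋯ + q_w(x)| ≤ C·‖x‖^s for every x ∈ Λ with ‖x‖ < ε. Then q₀(y) = 0 for every y ∈ Λ. -/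

import Mathlib

open scoped Real

/-!
Put `z n = m⁻ⁿ y` and `x n = a⁻ⁿ z n ∈ Λ`, so that `qᵢ (z n) = βᵢⁿ qᵢ (x n)` and
`‖x n‖ = O(α⁻ⁿ)`. Multiplying `∑ᵢ qᵢ (x n) = O(‖x n‖ ^ s)` by `β₀ⁿ` gives a quantity that tends to
`0` because `β₀ < α ^ s`. Its terms with `i ≠ 0` are `(β₀ / βᵢ)ⁿ qᵢ (z n)`, which tend to `0` as
`z n` stays in a ball, on which `qᵢ` is bounded. Hence `q₀ (z n) → 0`. But `m` is an isometry, so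
`z n` returns arbitrarily close to `y` for arbitrarily large `n`, and `q₀ y = 0` by continuity.
-/

open Filter Topology Asymptotics

theorem isometry_iterate {X : Type*} [PseudoEMetricSpace X] {T : X → X} (hT : Isometry T) :
    ∀ n, Isometry T^[n]
  | 0 => isometry_id
  | n + 1 => (isometry_iterate hT n).comp hT

theorem mapClusterPt_iterate_of_isometry {X : Type*} [PseudoMetricSpace X] {T : X → X}
    (hT : Isometry T) {K : Set X} (hK : IsCompact K) {y : X} (hy : ∀ n, T^[n] y ∈ K) :
    MapClusterPt y atTop fun n ↦ T^[n] y := by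
  rw [Metric.nhds_basis_ball.mapClusterPt_iff_frequently]
  intro δ hδ
  rw [frequently_atTop]
  intro N
  obtain ⟨_, -, φ, hφ, hlim⟩ := hK.tendsto_subseq hy
  obtain ⟨p, hp⟩ := Metric.cauchySeq_iff'.1 hlim.cauchySeq δ hδ
  have hgap : N + φ p ≤ φ (N + p) := hφ.add_le_nat N p
  refine ⟨φ (N + p) - φ p, by lia, ?_⟩
  -- `T^[φ p]` preserves distances, so this is the distance between two terms of a Cauchy sequence
  rw [Metric.mem_ball, ← (isometry_iterate hT (φ p)).dist_eq, ← Function.iterate_add_apply,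
    Nat.add_sub_cancel' (by lia)]
  exact hp (N + p) (by lia)

theorem norm_iterate_symm_le {E : Type*} [Norm E] {α : ℝ} (hα : 0 < α) {a : E ≃ E}
    (ha : ∀ x, α * ‖x‖ ≤ ‖a x‖) (n : ℕ) (x : E) : ‖a.symm^[n] x‖ ≤ α⁻¹ ^ n * ‖x‖ := by
  induction n with
  | zero => simp
  | succ n ih =>
    have hstep (v : E) : ‖a.symm v‖ ≤ α⁻¹ * ‖v‖ := by
      simpa only [a.apply_symm_apply] using (le_inv_mul_iff₀ hα).2 (ha (a.symm v))
    calc ‖a.symm^[n + 1] x‖ = ‖a.symm (a.symm^[n] x)‖ := by rw [Function.iterate_succ_apply']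
      _ ≤ α⁻¹ * ‖a.symm^[n] x‖ := hstep _
      _ ≤ α⁻¹ * (α⁻¹ ^ n * ‖x‖) := by gcongr
      _ = α⁻¹ ^ (n + 1) * ‖x‖ := by ring

theorem iterate_symm_comp_iterate_symm_mem {X : Type*} {f g : X ≃ X}
    (hcomm : Function.Commute g f) {Λ : Set X} (hΛ : ∀ y ∈ Λ, f.symm (g.symm y) ∈ Λ) {y : X}
    (hy : y ∈ Λ) (n : ℕ) : f.symm^[n] (g.symm^[n] y) ∈ Λ := by
  have hcomm_symm_left : Function.Commute g.symm f :=
    hcomm.inverse_left g.symm_apply_apply g.apply_symm_apply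
  have hcomm_symm : Function.Commute f.symm g.symm :=
    hcomm_symm_left.symm.inverse_left f.symm_apply_apply f.apply_symm_apply
  have horbit := Set.MapsTo.iterate (f := f.symm ∘ g.symm) hΛ n hy
  rwa [hcomm_symm.comp_iterate] at horbit

theorem pow_smul_apply_iterate_symm {X M F : Type*} [Monoid M] [MulAction M F] {a : X ≃ X}
    {q : X → F} {β : M} (hq : ∀ x, q (a x) = β • q x) (n : ℕ) (x : X) :
    β ^ n • q (a.symm^[n] x) = q x := by
  have hsemi : Function.Semiconj q a (β • ·) := hq
  have h := hsemi.iterate_right n (a.symm^[n] x)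
  rw [smul_iterate, (Function.LeftInverse.iterate a.apply_symm_apply n) x] at h
  exact h.symm

theorem mul_norm_le_norm_of_forall_apply_eq_mul {ι 𝕜 : Type*} [Fintype ι] [RCLike 𝕜] {α : ℝ}
    (hα : 0 ≤ α) {αs : ι → 𝕜} (hαs : ∀ i, α ≤ ‖αs i‖) {v w : EuclideanSpace 𝕜 ι}
    (h : ∀ i, w i = αs i * v i) : α * ‖v‖ ≤ ‖w‖ := by
  refine (sq_le_sq₀ (by positivity) (norm_nonneg w)).1 ?_
  rw [mul_pow, EuclideanSpace.norm_sq_eq, EuclideanSpace.norm_sq_eq, Finset.mul_sum]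
  refine Finset.sum_le_sum fun i _ ↦ ?_
  rw [h, norm_mul, mul_pow]
  gcongr
  exact hαs i

section GeometricGrowth

variable {E F : Type*} [SeminormedAddCommGroup E] [SeminormedAddCommGroup F]

theorem isBigO_norm_rpow_of_forall_norm_lt {Λ : Set E} {g : E → F} {C ε s : ℝ} (hε : 0 < ε)
    (hg : ∀ x ∈ Λ, ‖x‖ < ε → ‖g x‖ ≤ C * ‖x‖ ^ s) : g =O[𝓝[Λ] 0] fun x ↦ ‖x‖ ^ s := by
  refine .of_bound C ?_
  filter_upwards [self_mem_nhdsWithin,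
    mem_nhdsWithin_of_mem_nhds (Metric.ball_mem_nhds 0 hε)] with x hxΛ hx
  rw [Real.norm_of_nonneg (Real.rpow_nonneg (norm_nonneg x) s)]
  exact hg x hxΛ (mem_ball_zero_iff.1 hx)

theorem isBigO_pow_comp_of_isBigO_norm_rpow {Λ : Set E} {g : E → F} {s ρ : ℝ} (hs : 0 ≤ s)
    (hg : g =O[𝓝[Λ] 0] fun x ↦ ‖x‖ ^ s) (hρ₀ : 0 ≤ ρ) (hρ₁ : ρ < 1) {x : ℕ → E}
    (hxΛ : ∀ n, x n ∈ Λ) (hx : x =O[atTop] fun n ↦ ρ ^ n) :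
    (fun n ↦ g (x n)) =O[atTop] fun n ↦ (ρ ^ s) ^ n := by
  have hx₀ : Tendsto x atTop (𝓝 0) := by
    rw [tendsto_zero_iff_norm_tendsto_zero]
    exact hx.norm_left.trans_tendsto (tendsto_pow_atTop_nhds_zero_of_lt_one hρ₀ hρ₁)
  have hgx : (fun n ↦ g (x n)) =O[atTop] fun n ↦ ‖x n‖ ^ s :=
    hg.comp_tendsto (tendsto_nhdsWithin_iff.2 ⟨hx₀, .of_forall hxΛ⟩)
  have hpow : (fun n ↦ ‖x n‖ ^ s) =O[atTop] fun n ↦ (ρ ^ n) ^ s :=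
    hx.norm_left.rpow hs (.of_forall fun n ↦ pow_nonneg hρ₀ n)
  simpa only [Real.rpow_pow_comm hρ₀] using hgx.trans hpow

variable {𝕜 : Type*} [NormedField 𝕜] [NormedSpace 𝕜 F]

theorem isBigO_norm_inv_pow_of_pow_smul {γ : 𝕜} (hγ : γ ≠ 0) {u : ℕ → F}
    (hu : (fun n ↦ γ ^ n • u n) =O[atTop] fun _ ↦ (1 : ℝ)) :
    u =O[atTop] fun n ↦ ‖γ‖⁻¹ ^ n := by
  have h : (fun n ↦ γ⁻¹ ^ n) =O[atTop] fun n ↦ ‖γ‖⁻¹ ^ n :=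
    isBigO_of_le _ fun n ↦ by simp
  refine (h.smul hu).congr (fun n ↦ ?_) fun n ↦ by rw [smul_eq_mul, mul_one]
  rw [smul_smul, ← mul_pow, inv_mul_cancel₀ hγ, one_pow, one_smul]

theorem tendsto_pow_smul_zero_of_isBigO_pow {β : 𝕜} {ρ : ℝ} (hρ : 0 ≤ ρ) (hβρ : ‖β‖ * ρ < 1)
    {u : ℕ → F} (hu : u =O[atTop] fun n ↦ ρ ^ n) :
    Tendsto (fun n ↦ β ^ n • u n) atTop (𝓝 0) := by
  have hβ : (fun n ↦ β ^ n) =O[atTop] fun n ↦ ‖β‖ ^ n := isBigO_of_le _ fun n ↦ by simp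
  have hprod : (fun n ↦ β ^ n • u n) =O[atTop] fun n ↦ (‖β‖ * ρ) ^ n := by
    simpa only [smul_eq_mul, ← mul_pow] using hβ.smul hu
  rw [tendsto_zero_iff_norm_tendsto_zero]
  exact hprod.norm_left.trans_tendsto
    (tendsto_pow_atTop_nhds_zero_of_lt_one (by positivity) hβρ)

theorem tendsto_pow_smul_zero_of_tendsto_sum {ι : Type*} [Fintype ι] {β : ι → 𝕜} {i₀ : ι}
    (hβ : ∀ i ≠ i₀, ‖β i₀‖ < ‖β i‖) {u : ι → ℕ → F}
    (hu : ∀ i, (fun n ↦ β i ^ n • u i n) =O[atTop] fun _ ↦ (1 : ℝ))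
    (hsum : Tendsto (fun n ↦ β i₀ ^ n • ∑ i, u i n) atTop (𝓝 0)) :
    Tendsto (fun n ↦ β i₀ ^ n • u i₀ n) atTop (𝓝 0) := by
  classical
  have hterm : ∀ i ∈ Finset.univ.erase i₀, Tendsto (fun n ↦ β i₀ ^ n • u i n) atTop (𝓝 0) := by
    intro i hi
    have hlt := hβ i (Finset.ne_of_mem_erase hi)
    have hpos : 0 < ‖β i‖ := (norm_nonneg _).trans_lt hlt
    have hu_i := isBigO_norm_inv_pow_of_pow_smul (norm_pos_iff.1 hpos) (hu i)
    refine tendsto_pow_smul_zero_of_isBigO_pow (by positivity) ?_ hu_i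
    rwa [← div_eq_mul_inv, div_lt_one hpos]
  have hrest := tendsto_finsetSum _ hterm
  rw [Finset.sum_const_zero] at hrest
  refine (sub_zero (0 : F) ▸ hsum.sub hrest).congr fun n ↦ ?_
  rw [← Finset.smul_sum, ← smul_sub, Finset.sum_erase_eq_sub (Finset.mem_univ i₀), sub_sub_cancel]

end GeometricGrowth

theorem lowest_eigenfunction_vanishes_on_limit_set_general
    {E F 𝕜 ι : Type*} [SeminormedAddCommGroup E] [ProperSpace E] [NormedAddCommGroup F]
    [NormedField 𝕜] [NormedSpace 𝕜 F] [Fintype ι]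
    {α : ℝ} (hα : 1 < α) {a : E ≃ E} (ha : ∀ x, α * ‖x‖ ≤ ‖a x‖)
    {m : E ≃ᵢ E} (hm : m 0 = 0) (hcomm : Function.Commute m a)
    {Λ : Set E} (hΛ : ∀ y ∈ Λ, a.symm (m.symm y) ∈ Λ)
    {q : ι → E → F} (hqcont : ∀ i, Continuous (q i))
    {β : ι → 𝕜} {i₀ : ι} (hβ : ∀ i ≠ i₀, ‖β i₀‖ < ‖β i‖) (heig : ∀ i x, q i (a x) = β i • q i x)
    {s : ℝ} (hs : 0 ≤ s) (hβα : ‖β i₀‖ < α ^ s)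
    (hbound : (fun x ↦ ∑ i, q i x) =O[𝓝[Λ] 0] fun x ↦ ‖x‖ ^ s) :
    ∀ y ∈ Λ, q i₀ y = 0 := by
  intro y hy
  have hα₀ : 0 < α := one_pos.trans hα
  let z : ℕ → E := fun n ↦ m.symm^[n] y
  let x : ℕ → E := fun n ↦ a.symm^[n] (z n)
  have hxΛ (n : ℕ) : x n ∈ Λ :=
    iterate_symm_comp_iterate_symm_mem (g := m.toEquiv) hcomm hΛ hy n
  have hz_norm (n : ℕ) : ‖z n‖ = ‖y‖ :=
    (isometry_iterate m.symm.isometry n).norm_map_of_map_zero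
      (Function.iterate_fixed (m.toEquiv.symm_apply_eq.2 hm.symm) n) y
  have hz_mem (n : ℕ) : z n ∈ Metric.closedBall 0 ‖y‖ := by
    rw [mem_closedBall_zero_iff, hz_norm]
  have hx : x =O[atTop] fun n ↦ α⁻¹ ^ n := by
    refine .of_bound ‖y‖ (.of_forall fun n ↦ ?_)
    rw [Real.norm_of_nonneg (by positivity), mul_comm, ← hz_norm n]
    exact norm_iterate_symm_le hα₀ ha n (z n)
  have hqz (i : ι) (n : ℕ) : β i ^ n • q i (x n) = q i (z n) :=
    pow_smul_apply_iterate_symm (heig i) n (z n)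
  have hqz_bdd (i : ι) : (fun n ↦ β i ^ n • q i (x n)) =O[atTop] fun _ ↦ (1 : ℝ) := by
    obtain ⟨M, hM⟩ := (isCompact_closedBall (0 : E) ‖y‖).exists_bound_of_continuousOn
      (hqcont i).continuousOn
    refine .of_bound M (.of_forall fun n ↦ ?_)
    rw [hqz, norm_one, mul_one]
    exact hM _ (hz_mem n)
  have hsum : Tendsto (fun n ↦ β i₀ ^ n • ∑ i, q i (x n)) atTop (𝓝 0) := by
    refine tendsto_pow_smul_zero_of_isBigO_pow (by positivity) ?_
      (isBigO_pow_comp_of_isBigO_norm_rpow hs hbound (by positivity)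
        (inv_lt_one_of_one_lt₀ hα) hxΛ hx)
    rwa [Real.inv_rpow hα₀.le, ← div_eq_mul_inv, div_lt_one (by positivity)]
  have hq₀ : Tendsto (fun n ↦ q i₀ (z n)) atTop (𝓝 0) :=
    (tendsto_pow_smul_zero_of_tendsto_sum hβ hqz_bdd hsum).congr (hqz i₀)
  have hrec : MapClusterPt y atTop z :=
    mapClusterPt_iterate_of_isometry m.symm.isometry (isCompact_closedBall 0 ‖y‖) hz_mem
  exact eq_of_nhds_neBot ((hrec.continuousAt_comp (hqcont i₀).continuousAt).clusterPt.mono hq₀)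

/-- The core analytic argument of Proposition 4.5: if `Λ ⊆ ℝᵏ` is invariant under
`(m∘a)⁻¹`, where `a` is diagonal with all eigenvalues `αᵢ ≥ α > 1` and `m` is an
orthogonal map commuting with `a`, and if the sum of eigenfunctions
`q₀ + ⋯ + q_w` (with `q i ∘ a = β i • q i`, `0 < β 0 < β i` for `i ≠ 0`) satisfies
`|∑ qᵢ(x)| ≤ C‖x‖^s` near `0` on `Λ` with `β₀ < α^s`, then `q₀` vanishes on `Λ`. -/
theorem lowest_eigenfunction_vanishes_on_limit_set
    (k : ℕ) (hk : 1 ≤ k)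
    (α : ℝ) (hα : 1 < α) (αs : Fin k → ℝ) (hαs : ∀ i, α ≤ αs i)
    (a : EuclideanSpace ℝ (Fin k) ≃ₗ[ℝ] EuclideanSpace ℝ (Fin k))
    (ha : ∀ x i, a x i = αs i * x i)
    (m : EuclideanSpace ℝ (Fin k) ≃ₗᵢ[ℝ] EuclideanSpace ℝ (Fin k))
    (hcomm : ∀ x, m (a x) = a (m x))
    (Λ : Set (EuclideanSpace ℝ (Fin k)))
    (hΛ : ∀ y ∈ Λ, a.symm (m.symm y) ∈ Λ)
    (w : ℕ) (q : Fin (w + 1) → EuclideanSpace ℝ (Fin k) → ℝ)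
    (hqcont : ∀ i, Continuous (q i))
    (β : Fin (w + 1) → ℝ) (hβ0 : 0 < β 0) (hβ : ∀ i, i ≠ 0 → β 0 < β i)
    (heig : ∀ i x, q i (a x) = β i * q i x)
    (C ε s : ℝ) (hC : 0 ≤ C) (hε : 0 < ε) (hs : 0 < s) (hβα : β 0 < α ^ s)
    (hbound : ∀ x ∈ Λ, ‖x‖ < ε → |∑ i, q i x| ≤ C * ‖x‖ ^ s) :
    ∀ y ∈ Λ, q 0 y = 0 := by
  have hexp (x) : α * ‖x‖ ≤ ‖a x‖ :=
    mul_norm_le_norm_of_forall_apply_eq_mul (by linarith)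
      (fun i ↦ (hαs i).trans (le_abs_self _)) (ha x)
  have hβ₀_norm : ‖β 0‖ = β 0 := Real.norm_of_nonneg hβ0.le
  exact lowest_eigenfunction_vanishes_on_limit_set_general (a := a.toEquiv) hα hexp
    (m := m.toIsometryEquiv) m.map_zero hcomm hΛ hqcont
    (fun i hi ↦ hβ₀_norm.trans_lt ((hβ i hi).trans_le (le_abs_self _))) heig hs.le
    (hβ₀_norm.trans_lt hβα) (isBigO_norm_rpow_of_forall_norm_lt hε hbound)
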